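/- Let C ⊆ 𝔽₂^n be a binary linear code, X uniform on C, Y^ε the output of BEC(ε), and i ≠ j two coordinates. Then the conditional mutual information satisfies I(X_i ; X_j | Y^ε_{∼i,j}) = Pr(Z^ε ∈ B_4^{ij}) = Q_4, and the conditional entropy satisfies H(X_i | Y^ε_{∼i}) = Q_3 + ε·Q_4 + Q_5, where Q_k = Pr(Z^ε ∈ B_k^{ij}). -/

import Mathlib

open scoped Classical
open Finset

noncomputable section

/-- Vectors in 𝔽₂^n (codewords and binary patterns). -/
abbrev Pattern (n : ℕ) := Fin n → ZMod 2

/-- Hamming weight. -/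
def wH {n : ℕ} (x : Pattern n) : ℕ := hammingNorm x

/-- `z` covers `x` if the support of `x` is contained in the support of `z`. -/
def covers {n : ℕ} (z x : Pattern n) : Prop := ∀ k, x k ≠ 0 → z k ≠ 0

/-- Sample space: a codeword of C together with an erasure pattern (1 = erased). -/
abbrev Samp (n : ℕ) (C : Submodule (ZMod 2) (Pattern n)) := C × Pattern n

/-- Joint probability mass: X uniform on C, coordinates erased i.i.d. with prob. ε. -/
def pmfP {n : ℕ} (C : Submodule (ZMod 2) (Pattern n)) (ε : ℝ) (ω : Samp n C) : ℝ :=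
  (Nat.card C : ℝ)⁻¹ * ε ^ wH ω.2 * (1 - ε) ^ (n - wH ω.2)

/-- The BEC output Y: erased coordinates become `none`. -/
def Yout {n : ℕ} {C : Submodule (ZMod 2) (Pattern n)} (ω : Samp n C) :
    Fin n → Option (ZMod 2) :=
  fun k => if ω.2 k = 1 then none else some (ω.1.1 k)

/-- Y with coordinate i removed. -/
def Ynot {n : ℕ} {C : Submodule (ZMod 2) (Pattern n)} (i : Fin n) (ω : Samp n C) :
    {k : Fin n // k ≠ i} → Option (ZMod 2) :=
  fun k => Yout ω k.1

/-- Y with coordinates i and j removed. -/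
def Ynot2 {n : ℕ} {C : Submodule (ZMod 2) (Pattern n)} (i j : Fin n) (ω : Samp n C) :
    {k : Fin n // k ≠ i ∧ k ≠ j} → Option (ZMod 2) :=
  fun k => Yout ω k.1

/-- Probability of an event under a mass function p. -/
def prE {Ω : Type*} [Fintype Ω] (p : Ω → ℝ) (E : Set Ω) : ℝ :=
  ∑ ω ∈ univ.filter (· ∈ E), p ω

/-- Shannon entropy (in bits) of the random variable f under p. -/
def entr {Ω A : Type*} [Fintype Ω] [Fintype A] (p : Ω → ℝ) (f : Ω → A) : ℝ :=
  -∑ a : A, prE p {ω | f ω = a} * Real.logb 2 (prE p {ω | f ω = a})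

/-- Conditional Shannon entropy H(f | g) in bits. -/
def condEnt {Ω A B : Type*} [Fintype Ω] [Fintype A] [Fintype B]
    (p : Ω → ℝ) (f : Ω → A) (g : Ω → B) : ℝ :=
  -∑ a : A, ∑ b : B,
    prE p {ω | f ω = a ∧ g ω = b} *
      Real.logb 2 (prE p {ω | f ω = a ∧ g ω = b} / prE p {ω | g ω = b})

/-- Mutual information I(f ; g) in bits. -/
def mutInf {Ω A B : Type*} [Fintype Ω] [Fintype A] [Fintype B]
    (p : Ω → ℝ) (f : Ω → A) (g : Ω → B) : ℝ :=
  entr p f - condEnt p f g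

/-- Conditional mutual information I(f ; g | h) in bits. -/
def condMI {Ω A B D : Type*} [Fintype Ω] [Fintype A] [Fintype B] [Fintype D]
    (p : Ω → ℝ) (f : Ω → A) (g : Ω → B) (h : Ω → D) : ℝ :=
  condEnt p f h - condEnt p f (fun ω => (g ω, h ω))

/-- Pr(Z^ε ∈ B) for the random pattern Z^ε = Z^ε(ij) with Z^ε_i = Z^ε_j = 1 and the
remaining coordinates i.i.d. Bernoulli(ε). -/
def probZ {n : ℕ} (ε : ℝ) (i j : Fin n) (B : Set (Pattern n)) : ℝ :=
  ∑ z ∈ univ.filter (fun z : Pattern n => z ∈ B ∧ z i = 1 ∧ z j = 1),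
    ε ^ (univ.filter (fun k => k ≠ i ∧ k ≠ j ∧ z k = 1)).card *
      (1 - ε) ^ (univ.filter (fun k => k ≠ i ∧ k ≠ j ∧ z k = 0)).card

/-- C^{ij}_{ab}(z): codewords c ∈ C with (c_i, c_j) = (a, b) covered by z. -/
def Cab {n : ℕ} (C : Submodule (ZMod 2) (Pattern n)) (i j : Fin n) (a b : ZMod 2)
    (z : Pattern n) : Set (Pattern n) :=
  {c | c ∈ C ∧ c i = a ∧ c j = b ∧ covers z c}

def B1 {n : ℕ} (C : Submodule (ZMod 2) (Pattern n)) (i j : Fin n) : Set (Pattern n) :=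
  {z | Cab C i j 0 1 z = ∅ ∧ Cab C i j 1 0 z = ∅ ∧ Cab C i j 1 1 z = ∅}

def B2 {n : ℕ} (C : Submodule (ZMod 2) (Pattern n)) (i j : Fin n) : Set (Pattern n) :=
  {z | Cab C i j 0 1 z ≠ ∅ ∧ Cab C i j 1 0 z = ∅ ∧ Cab C i j 1 1 z = ∅}

def B3 {n : ℕ} (C : Submodule (ZMod 2) (Pattern n)) (i j : Fin n) : Set (Pattern n) :=
  {z | Cab C i j 1 0 z ≠ ∅ ∧ Cab C i j 0 1 z = ∅ ∧ Cab C i j 1 1 z = ∅}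

def B4 {n : ℕ} (C : Submodule (ZMod 2) (Pattern n)) (i j : Fin n) : Set (Pattern n) :=
  {z | Cab C i j 1 1 z ≠ ∅ ∧ Cab C i j 0 1 z = ∅ ∧ Cab C i j 1 0 z = ∅}

def B5 {n : ℕ} (C : Submodule (ZMod 2) (Pattern n)) (i j : Fin n) : Set (Pattern n) :=
  {z | Cab C i j 0 1 z ≠ ∅ ∧ Cab C i j 1 0 z ≠ ∅ ∧ Cab C i j 1 1 z ≠ ∅}

lemma condEnt_eq_sum {Ω A B : Type*} [Fintype Ω] [Fintype A] [Fintype B]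
    (p : Ω → ℝ) (f : Ω → A) (g : Ω → B) :
    condEnt p f g = -∑ ω, p ω * Real.logb 2 (prE p {ω' | f ω' = f ω ∧ g ω' = g ω} /
      prE p {ω' | g ω' = g ω}) := by
  unfold condEnt
  congr 1
  have h : ∀ (a : A) (b : B) (L : ℝ), prE p {ω | f ω = a ∧ g ω = b} * L =
      ∑ ω, if f ω = a then (if g ω = b then p ω * L else 0) else 0 := by
    intro a b L
    unfold prE
    rw [Finset.sum_mul, Finset.sum_filter]
    refine Finset.sum_congr rfl fun ω _ => ?_
    by_cases h1 : f ω = a <;> by_cases h2 : g ω = b <;> simp [h1, h2]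
  calc _ = ∑ a, ∑ b, ∑ ω, (if f ω = a then (if g ω = b then p ω *
        Real.logb 2 (prE p {ω | f ω = a ∧ g ω = b} / prE p {ω | g ω = b}) else 0) else 0) :=
        Finset.sum_congr rfl fun a _ => Finset.sum_congr rfl fun b _ => h a b _
    _ = ∑ a, ∑ ω, ∑ b, (if f ω = a then (if g ω = b then p ω *
        Real.logb 2 (prE p {ω | f ω = a ∧ g ω = b} / prE p {ω | g ω = b}) else 0) else 0) :=
        Finset.sum_congr rfl fun a _ => Finset.sum_comm
    _ = ∑ ω, ∑ a, ∑ b, (if f ω = a then (if g ω = b then p ω *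
        Real.logb 2 (prE p {ω | f ω = a ∧ g ω = b} / prE p {ω | g ω = b}) else 0) else 0) :=
        Finset.sum_comm
    _ = _ := by
        refine Finset.sum_congr rfl fun ω _ => ?_
        rw [Finset.sum_eq_single (f ω), Finset.sum_eq_single (g ω)]
        · simp
        · intro b _ hb; simp [Ne.symm hb]
        · simp
        · intro b _ hb; simp [Ne.symm hb]
        · simp

/-- weight of an erasure pattern -/
def wgt {n : ℕ} (ε : ℝ) (z : Pattern n) : ℝ := ε ^ wH z * (1 - ε) ^ (n - wH z)

lemma wgt_pos {n : ℕ} {ε : ℝ} (hε : ε ∈ Set.Ioo (0 : ℝ) 1) (z : Pattern n) : 0 < wgt ε z :=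
  mul_pos (pow_pos hε.1 _) (pow_pos (by linarith [hε.2]) _)

lemma zmod2_cases (a : ZMod 2) : a = 0 ∨ a = 1 := by
  revert a; decide

lemma card_translate {G : Type*} [AddCommGroup G] [Fintype G] (P Q : G → Prop)
    [DecidablePred P] [DecidablePred Q] (e : G)
    (h : ∀ d, P d ↔ Q (d + e)) :
    (univ.filter P).card = (univ.filter Q).card := by
  refine Finset.card_equiv (Equiv.addRight e) ?_
  intro d
  simp [h]

lemma ratio_lemma {n : ℕ} (C : Submodule (ZMod 2) (Pattern n)) (i : Fin n)
    (K : Set (Fin n)) (c : C) :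
    Real.logb 2 (((univ.filter (fun d : C => d.1 i = c.1 i ∧ ∀ k ∈ K, d.1 k = c.1 k)).card : ℝ) /
      ((univ.filter (fun d : C => ∀ k ∈ K, d.1 k = c.1 k)).card : ℝ)) =
    if ∃ d ∈ C, d i = 1 ∧ ∀ k ∈ K, d k = 0 then -1 else 0 := by
  set N1 := univ.filter (fun d : C => d.1 i = c.1 i ∧ ∀ k ∈ K, d.1 k = c.1 k) with hN1
  set N := univ.filter (fun d : C => ∀ k ∈ K, d.1 k = c.1 k) with hN
  have hpos : 0 < N1.card := Finset.card_pos.mpr ⟨c, by simp [hN1]⟩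
  have hsplit : N.card = N1.card +
      (univ.filter (fun d : C => d.1 i ≠ c.1 i ∧ ∀ k ∈ K, d.1 k = c.1 k)).card := by
    rw [← Finset.card_filter_add_card_filter_not (s := N) (fun d : C => d.1 i = c.1 i)]
    congr 2 <;> ext d <;> simp [hN, hN1, and_comm]
  have hposR : (0 : ℝ) < N1.card := by exact_mod_cast hpos
  split_ifs with h
  · obtain ⟨e, heC, hei, heK⟩ := h
    have h2 : (univ.filter (fun d : C => d.1 i ≠ c.1 i ∧ ∀ k ∈ K, d.1 k = c.1 k)).card
        = N1.card := by
      refine card_translate _ _ (⟨e, heC⟩ : C) ?_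
      intro d
      have : ∀ a b : ZMod 2, a ≠ b ↔ a + 1 = b := by decide
      simp only [Submodule.coe_add, Pi.add_apply, hei]
      rw [this]
      refine and_congr Iff.rfl (forall_congr' fun k => forall_congr' fun hk => ?_)
      rw [heK k hk, add_zero]
    rw [hsplit, h2]
    have : (N1.card : ℝ) / ((N1.card + N1.card : ℕ) : ℝ) = 2⁻¹ := by
      push_cast; field_simp; norm_num
    rw [this, Real.logb_inv, Real.logb_self_eq_one (by norm_num)]
  · have h2 : (univ.filter (fun d : C => d.1 i ≠ c.1 i ∧ ∀ k ∈ K, d.1 k = c.1 k)) = ∅ := by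
      rw [Finset.filter_eq_empty_iff]
      rintro d - ⟨h3, h4⟩
      refine h ⟨d.1 - c.1, C.sub_mem d.2 c.2, ?_, ?_⟩
      · have : ∀ a b : ZMod 2, a ≠ b → a - b = 1 := by decide
        exact this _ _ h3
      · intro k hk
        simp [h4 k hk]
    rw [hsplit, h2]
    simp [hposR.ne']

lemma prE_prod {n : ℕ} (C : Submodule (ZMod 2) (Pattern n)) (ε : ℝ)
    (E : Set (Samp n C)) (P : C → Prop) (R : Pattern n → Prop)
    [DecidablePred P] [DecidablePred R]
    (h : ∀ ω : Samp n C, ω ∈ E ↔ P ω.1 ∧ R ω.2) :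
    prE (pmfP C ε) E = ((univ.filter P).card : ℝ) *
      ((Nat.card C : ℝ)⁻¹ * ∑ z ∈ univ.filter R, wgt ε z) := by
  unfold prE
  have : (univ.filter (· ∈ E)) = (univ.filter P) ×ˢ (univ.filter R) := by
    ext ω; simp [h]
  rw [this, Finset.sum_product]
  simp only [pmfP, wgt, mul_assoc, ← Finset.mul_sum]
  rw [Finset.sum_const, nsmul_eq_mul]
  ring

lemma condEnt_code {n : ℕ} (C : Submodule (ZMod 2) (Pattern n)) {ε : ℝ}
    (hε : ε ∈ Set.Ioo (0 : ℝ) 1) (i : Fin n) {B : Type*} [Fintype B] (g : Samp n C → B)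
    (K : Pattern n → Set (Fin n)) (R : Pattern n → Pattern n → Prop) (hR : ∀ z, R z z)
    (hg : ∀ ω ω' : Samp n C, g ω' = g ω ↔
      (∀ k ∈ K ω.2, ω'.1.1 k = ω.1.1 k) ∧ R ω.2 ω'.2) :
    condEnt (pmfP C ε) (fun ω => ω.1.1 i) g =
      ∑ z, wgt ε z * if ∃ d ∈ C, d i = 1 ∧ ∀ k ∈ K z, d k = 0 then 1 else 0 := by
  have hcard : (0 : ℝ) < Nat.card C := by
    exact_mod_cast Nat.card_pos
  rw [condEnt_eq_sum]
  have key : ∀ ω : Samp n C, Real.logb 2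
      (prE (pmfP C ε) {ω' | ω'.1.1 i = ω.1.1 i ∧ g ω' = g ω} /
        prE (pmfP C ε) {ω' | g ω' = g ω}) =
      if ∃ d ∈ C, d i = 1 ∧ ∀ k ∈ K ω.2, d k = 0 then -1 else 0 := by
    intro ω
    rw [← ratio_lemma C i (K ω.2) ω.1]
    rw [prE_prod C ε _ (fun d : C => d.1 i = ω.1.1 i ∧ ∀ k ∈ K ω.2, d.1 k = ω.1.1 k) (R ω.2),
      prE_prod C ε _ (fun d : C => ∀ k ∈ K ω.2, d.1 k = ω.1.1 k) (R ω.2)]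
    · rw [mul_div_mul_right]
      refine mul_ne_zero (inv_ne_zero hcard.ne') (ne_of_gt ?_)
      exact Finset.sum_pos (fun z _ => wgt_pos hε z) ⟨ω.2, by simp [hR]⟩
    · intro ω'; exact hg ω ω'
    · intro ω'
      simp only [Set.mem_ofPred_eq, hg ω ω', and_assoc]
  simp only [key]
  rw [Fintype.sum_prod_type, Finset.sum_comm, ← Finset.sum_neg_distrib]
  refine Finset.sum_congr rfl fun z _ => ?_
  by_cases h : ∃ d ∈ C, d i = 1 ∧ ∀ k ∈ K z, d k = 0
  · simp only [pmfP, wgt, if_pos h]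
    rw [Finset.sum_const, nsmul_eq_mul, Finset.card_univ, ← Nat.card_eq_fintype_card]
    field_simp
  · simp only [if_neg h]
    simp

lemma sum_split {n : ℕ} (i : Fin n) (h : Pattern n → ℝ) :
    ∑ z, h z = ∑ z, if z i = 1 then h z + h (Function.update z i 0) else 0 := by
  rw [← Finset.sum_filter, Finset.sum_add_distrib,
    ← Finset.sum_filter_add_sum_filter_not univ (fun z : Pattern n => z i = 1)]
  congr 1
  refine Finset.sum_nbij' (fun z => Function.update z i 1) (fun z => Function.update z i 0)
    ?_ ?_ ?_ ?_ ?_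
  · intro z _; simp
  · intro z _; simp
  · intro z hz
    have : z i = 0 := (zmod2_cases (z i)).resolve_right (by simpa using hz)
    simp [← this]
  · intro z hz
    have : z i = 1 := by simpa using hz
    simp [← this]
  · intro z hz
    have : z i = 0 := (zmod2_cases (z i)).resolve_right (by simpa using hz)
    simp [← this]

lemma wgt_prod {n : ℕ} (ε : ℝ) (z : Pattern n) :
    wgt ε z = ∏ k, if z k = 1 then ε else 1 - ε := by
  rw [Finset.prod_ite, Finset.prod_const, Finset.prod_const]
  have h1 : wH z = (univ.filter (fun k => z k = 1)).card := by
    unfold wH hammingNorm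
    congr 1; ext k
    have : ∀ a : ZMod 2, a ≠ 0 ↔ a = 1 := by decide
    simp [this]
  have h2 := Finset.card_filter_add_card_filter_not (s := (univ : Finset (Fin n))) (fun k => z k = 1)
  rw [Finset.card_univ, Fintype.card_fin] at h2
  unfold wgt
  rw [h1]
  congr 2
  omega

/-- weight off `i, j` -/
def wgt' {n : ℕ} (ε : ℝ) (i j : Fin n) (z : Pattern n) : ℝ :=
    ε ^ (univ.filter (fun k => k ≠ i ∧ k ≠ j ∧ z k = 1)).card *
      (1 - ε) ^ (univ.filter (fun k => k ≠ i ∧ k ≠ j ∧ z k = 0)).card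

lemma wgt_eq {n : ℕ} (ε : ℝ) {i j : Fin n} (hij : i ≠ j) (z : Pattern n) :
    wgt ε z = (if z i = 1 then ε else 1 - ε) * ((if z j = 1 then ε else 1 - ε) *
      wgt' ε i j z) := by
  rw [wgt_prod, ← Finset.mul_prod_erase univ _ (mem_univ i),
    ← Finset.mul_prod_erase (univ.erase i) _ (show j ∈ univ.erase i by simp [hij.symm])]
  congr 2
  rw [Finset.prod_ite, Finset.prod_const, Finset.prod_const]
  unfold wgt'
  have : ∀ a : ZMod 2, ¬ a = 1 ↔ a = 0 := by decide
  congr 3 <;> ext k <;> simp [this] <;> tauto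

lemma wgt'_congr {n : ℕ} (ε : ℝ) {i j : Fin n} (z z' : Pattern n)
    (h : ∀ k, k ≠ i → k ≠ j → z k = z' k) : wgt' ε i j z = wgt' ε i j z' := by
  unfold wgt'
  congr 3 <;> ext k <;> simp <;> intro h1 h2 <;> rw [h k h1 h2]

lemma sum_wgt {n : ℕ} (ε : ℝ) {i j : Fin n} (hij : i ≠ j) (G : Pattern n → ℝ)
    (hG : ∀ z, G (Function.update z i 0) = G z) :
    ∑ z, wgt ε z * G z = ∑ z, if z i = 1 ∧ z j = 1 then
      wgt' ε i j z * (ε * G z + (1 - ε) * G (Function.update z j 0)) else 0 := by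
  rw [sum_split i, sum_split j]
  refine Finset.sum_congr rfl fun z _ => ?_
  have hu : ∀ z : Pattern n, wgt' ε i j (Function.update z i 0) = wgt' ε i j z := fun z =>
    wgt'_congr ε _ _ fun k h1 h2 => by simp [h1]
  have hv : ∀ z : Pattern n, wgt' ε i j (Function.update z j 0) = wgt' ε i j z := fun z =>
    wgt'_congr ε _ _ fun k h1 h2 => by simp [h2]
  by_cases h1 : z i = 1 <;> by_cases h2 : z j = 1 <;>
    simp [h1, h2, hG, wgt_eq ε hij, hu, hv, hij, hij.symm] <;> ring

lemma probZ_eq {n : ℕ} (ε : ℝ) (i j : Fin n) (B : Set (Pattern n)) :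
    probZ ε i j B = ∑ z, if z i = 1 ∧ z j = 1 then
      wgt' ε i j z * (if z ∈ B then 1 else 0) else 0 := by
  unfold probZ
  rw [Finset.sum_filter]
  refine Finset.sum_congr rfl fun z _ => ?_
  by_cases h1 : z ∈ B <;> by_cases h2 : z i = 1 ∧ z j = 1 <;> simp [h1, h2, wgt']

lemma Yout_eq {n : ℕ} {C : Submodule (ZMod 2) (Pattern n)} (ω ω' : Samp n C) (k : Fin n) :
    Yout ω' k = Yout ω k ↔ (ω.2 k = 0 → ω'.1.1 k = ω.1.1 k) ∧ ω.2 k = ω'.2 k := by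
  unfold Yout
  rcases zmod2_cases (ω.2 k) with h | h <;> rcases zmod2_cases (ω'.2 k) with h' | h' <;>
    simp [h, h']

lemma third {n : ℕ} (C : Submodule (ZMod 2) (Pattern n)) (i j : Fin n) (z : Pattern n)
    (a b a' b' : ZMod 2) (h : (Cab C i j a b z).Nonempty) (h' : (Cab C i j a' b' z).Nonempty) :
    (Cab C i j (a + a') (b + b') z).Nonempty := by
  obtain ⟨c, hc, hi, hj, hz⟩ := h
  obtain ⟨c', hc', hi', hj', hz'⟩ := h'
  refine ⟨c + c', C.add_mem hc hc', by simp [hi, hi'], by simp [hj, hj'], ?_⟩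
  intro k hk hzk
  have h1 : c k = 0 := by by_contra h; exact hz k h hzk
  have h2 : c' k = 0 := by by_contra h; exact hz' k h hzk
  exact hk (by simp [h1, h2])

lemma ind_three {n : ℕ} (C : Submodule (ZMod 2) (Pattern n)) (i j : Fin n) (z : Pattern n) :
    ((if (Cab C i j 1 0 z).Nonempty ∨ (Cab C i j 1 1 z).Nonempty then 1 else 0 : ℝ) =
      (if z ∈ B3 C i j then 1 else 0) + (if z ∈ B4 C i j then 1 else 0) +
      (if z ∈ B5 C i j then 1 else 0)) ∧
    ((if (Cab C i j 1 0 z).Nonempty then 1 else 0 : ℝ) =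
      (if z ∈ B3 C i j then 1 else 0) + (if z ∈ B5 C i j then 1 else 0)) := by
  have e2 : (1 : ZMod 2) + 1 = 0 := by decide
  have h1 := third C i j z 0 1 1 0
  have h2 := third C i j z 0 1 1 1
  have h3 := third C i j z 1 0 1 1
  simp only [zero_add, add_zero, e2] at h1 h2 h3
  simp only [B3, B4, B5, Set.mem_ofPred_eq, ← Set.not_nonempty_iff_eq_empty, ne_eq, not_not]
  by_cases a : (Cab C i j 0 1 z).Nonempty <;> by_cases b : (Cab C i j 1 0 z).Nonempty <;>
    by_cases c : (Cab C i j 1 1 z).Nonempty <;> simp_all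

lemma pred1 {n : ℕ} (C : Submodule (ZMod 2) (Pattern n)) (i j : Fin n) (z : Pattern n)
    (hi : z i = 1) (hj : z j = 1) :
    (∃ d ∈ C, d i = 1 ∧ ∀ k, k ≠ i → k ≠ j → z k = 0 → d k = 0) ↔
      (Cab C i j 1 0 z).Nonempty ∨ (Cab C i j 1 1 z).Nonempty := by
  constructor
  · rintro ⟨d, hd, hdi, h⟩
    have hc : covers z d := by
      intro k hk hz
      refine hk (h k ?_ ?_ hz)
      · rintro rfl; simp [hi] at hz
      · rintro rfl; simp [hj] at hz
    rcases zmod2_cases (d j) with h0 | h0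
    · exact Or.inl ⟨d, hd, hdi, h0, hc⟩
    · exact Or.inr ⟨d, hd, hdi, h0, hc⟩
  · rintro (⟨d, hd, hdi, _, hc⟩ | ⟨d, hd, hdi, _, hc⟩) <;>
    exact ⟨d, hd, hdi, fun k _ _ hz => by_contra fun h => hc k h hz⟩

lemma pred2 {n : ℕ} (C : Submodule (ZMod 2) (Pattern n)) (i j : Fin n) (z : Pattern n)
    (hi : z i = 1) (hj : z j = 1) :
    (∃ d ∈ C, d i = 1 ∧ d j = 0 ∧ ∀ k, k ≠ i → k ≠ j → z k = 0 → d k = 0) ↔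
      (Cab C i j 1 0 z).Nonempty := by
  constructor
  · rintro ⟨d, hd, hdi, hdj, h⟩
    refine ⟨d, hd, hdi, hdj, ?_⟩
    intro k hk hz
    refine hk (h k ?_ ?_ hz)
    · rintro rfl; simp [hi] at hz
    · rintro rfl; simp [hj] at hz
  · rintro ⟨d, hd, hdi, hdj, hc⟩
    exact ⟨d, hd, hdi, hdj, fun k _ _ hz => by_contra fun h => hc k h hz⟩

lemma ent_Y2 {n : ℕ} (C : Submodule (ZMod 2) (Pattern n)) {ε : ℝ}
    (hε : ε ∈ Set.Ioo (0 : ℝ) 1) {i j : Fin n} (hij : i ≠ j) :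
    condEnt (pmfP C ε) (fun ω => ω.1.1 i) (Ynot2 i j) =
      probZ ε i j (B3 C i j) + probZ ε i j (B4 C i j) + probZ ε i j (B5 C i j) := by
  rw [condEnt_code C hε i (Ynot2 i j) (fun z => {k | k ≠ i ∧ k ≠ j ∧ z k = 0})
    (fun z z' => ∀ k, k ≠ i → k ≠ j → z k = z' k) (fun z k _ _ => rfl)]
  · rw [sum_wgt ε hij, probZ_eq, probZ_eq, probZ_eq, ← Finset.sum_add_distrib,
      ← Finset.sum_add_distrib]
    · refine Finset.sum_congr rfl fun z _ => ?_
      by_cases h : z i = 1 ∧ z j = 1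
      · simp only [h, and_self, if_true, ← mul_add]
        rw [← (ind_three C i j z).1]
        simp only [Set.mem_ofPred_eq, and_imp]
        have e : ∀ (d : Pattern n), (∀ k, k ≠ i → k ≠ j → Function.update z j 0 k = 0 → d k = 0) ↔
            (∀ k, k ≠ i → k ≠ j → z k = 0 → d k = 0) := fun d =>
          forall_congr' fun k => forall_congr' fun h1 => forall_congr' fun h2 => by simp [h2]
        simp only [e, pred1 C i j z h.1 h.2]
        ring
      · simp [h]
    · intro z
      have e : ∀ (d : Pattern n), (∀ k, k ≠ i → k ≠ j → Function.update z i 0 k = 0 → d k = 0) ↔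
            (∀ k, k ≠ i → k ≠ j → z k = 0 → d k = 0) := fun d =>
          forall_congr' fun k => forall_congr' fun h1 => forall_congr' fun h2 => by simp [h1]
      simp only [Set.mem_ofPred_eq, and_imp, e]
  · intro ω ω'
    simp only [funext_iff, Ynot2, Subtype.forall, Yout_eq, Set.mem_ofPred_eq, and_imp]
    constructor
    · exact fun h => ⟨fun k h1 h2 => (h k h1 h2).1, fun k h1 h2 => (h k h1 h2).2⟩
    · exact fun h k h1 h2 => ⟨h.1 k h1 h2, h.2 k h1 h2⟩

lemma ent_XY2 {n : ℕ} (C : Submodule (ZMod 2) (Pattern n)) {ε : ℝ}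
    (hε : ε ∈ Set.Ioo (0 : ℝ) 1) {i j : Fin n} (hij : i ≠ j) :
    condEnt (pmfP C ε) (fun ω => ω.1.1 i) (fun ω => (ω.1.1 j, Ynot2 i j ω)) =
      probZ ε i j (B3 C i j) + probZ ε i j (B5 C i j) := by
  rw [condEnt_code C hε i _ (fun z => {k | k = j ∨ (k ≠ i ∧ k ≠ j ∧ z k = 0)})
    (fun z z' => ∀ k, k ≠ i → k ≠ j → z k = z' k) (fun z k _ _ => rfl)]
  · rw [sum_wgt ε hij, probZ_eq, probZ_eq, ← Finset.sum_add_distrib]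
    · refine Finset.sum_congr rfl fun z _ => ?_
      by_cases h : z i = 1 ∧ z j = 1
      · simp only [h, and_self, if_true, ← mul_add]
        rw [← (ind_three C i j z).2]
        simp only [Set.mem_ofPred_eq, and_imp, or_imp, forall_and, forall_eq]
        have e : ∀ (d : Pattern n), (∀ k, k ≠ i → k ≠ j → Function.update z j 0 k = 0 → d k = 0) ↔
            (∀ k, k ≠ i → k ≠ j → z k = 0 → d k = 0) := fun d =>
          forall_congr' fun k => forall_congr' fun h1 => forall_congr' fun h2 => by simp [h2]
        simp only [e, pred2 C i j z h.1 h.2]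
        ring
      · simp [h]
    · intro z
      have e : ∀ (d : Pattern n), (∀ k, k ≠ i → k ≠ j → Function.update z i 0 k = 0 → d k = 0) ↔
            (∀ k, k ≠ i → k ≠ j → z k = 0 → d k = 0) := fun d =>
          forall_congr' fun k => forall_congr' fun h1 => forall_congr' fun h2 => by simp [h1]
      simp only [Set.mem_ofPred_eq, and_imp, or_imp, forall_and, forall_eq, e]
  · intro ω ω'
    simp only [Prod.mk.injEq, funext_iff, Ynot2, Subtype.forall, Yout_eq, Set.mem_ofPred_eq,
      and_imp, or_imp, forall_and, forall_eq, and_assoc]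

lemma ent_Y1 {n : ℕ} (C : Submodule (ZMod 2) (Pattern n)) {ε : ℝ}
    (hε : ε ∈ Set.Ioo (0 : ℝ) 1) {i j : Fin n} (hij : i ≠ j) :
    condEnt (pmfP C ε) (fun ω => ω.1.1 i) (Ynot i) =
      probZ ε i j (B3 C i j) + ε * probZ ε i j (B4 C i j) + probZ ε i j (B5 C i j) := by
  rw [condEnt_code C hε i (Ynot i) (fun z => {k | k ≠ i ∧ z k = 0})
    (fun z z' => ∀ k, k ≠ i → z k = z' k) (fun z k _ => rfl)]
  · rw [sum_wgt ε hij, probZ_eq, probZ_eq, probZ_eq, Finset.mul_sum, ← Finset.sum_add_distrib,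
      ← Finset.sum_add_distrib]
    · refine Finset.sum_congr rfl fun z _ => ?_
      by_cases h : z i = 1 ∧ z j = 1
      · simp only [h, and_self, if_true]
        simp only [Set.mem_ofPred_eq, and_imp]
        have e : ∀ (d : Pattern n), (∀ k, k ≠ i → Function.update z j 0 k = 0 → d k = 0) ↔
            d j = 0 ∧ (∀ k, k ≠ i → k ≠ j → z k = 0 → d k = 0) := by
          intro d
          constructor
          · intro H
            refine ⟨H j hij.symm (by simp), fun k h1 h2 h3 => H k h1 (by simpa [h2] using h3)⟩
          · rintro ⟨H1, H2⟩ k h1 h3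
            by_cases h2 : k = j
            · rw [h2]; exact H1
            · exact H2 k h1 h2 (by simpa [h2] using h3)
        have e' : ∀ (d : Pattern n), (∀ k, k ≠ i → z k = 0 → d k = 0) ↔
            (∀ k, k ≠ i → k ≠ j → z k = 0 → d k = 0) := by
          intro d
          refine ⟨fun H k h1 _ h3 => H k h1 h3, fun H k h1 h3 => H k h1 ?_ h3⟩
          rintro rfl
          simp [h.2] at h3
        simp only [e, e', pred1 C i j z h.1 h.2, pred2 C i j z h.1 h.2]
        rw [(ind_three C i j z).1, (ind_three C i j z).2]
        ring
      · simp [h]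
    · intro z
      have e : ∀ (d : Pattern n), (∀ k, k ≠ i → Function.update z i 0 k = 0 → d k = 0) ↔
            (∀ k, k ≠ i → z k = 0 → d k = 0) := fun d =>
          forall_congr' fun k => forall_congr' fun h1 => by simp [h1]
      simp only [Set.mem_ofPred_eq, and_imp, e]
  · intro ω ω'
    simp only [funext_iff, Ynot, Subtype.forall, Yout_eq, Set.mem_ofPred_eq, and_imp, forall_and]

theorem condMI_eq_Q4_and_condEnt (n : ℕ) (C : Submodule (ZMod 2) (Pattern n))
    (ε : ℝ) (hε : ε ∈ Set.Ioo (0 : ℝ) 1) (i j : Fin n) (hij : i ≠ j) :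
    condMI (pmfP C ε) (fun ω => ω.1.1 i) (fun ω => ω.1.1 j) (Ynot2 i j) =
      probZ ε i j (B4 C i j) ∧
    condEnt (pmfP C ε) (fun ω => ω.1.1 i) (Ynot i) =
      probZ ε i j (B3 C i j) + ε * probZ ε i j (B4 C i j) + probZ ε i j (B5 C i j) := by
  refine ⟨?_, ent_Y1 C hε hij⟩
  unfold condMI
  rw [ent_Y2 C hε hij, ent_XY2 C hε hij]
  ring

end
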